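/- Let k : [0,∞) → ℝ be convex, differentiable and nonincreasing, and set g = −k′ (so g ≥ 0). Let x₁, …, xₙ ∈ ℝ^d, let H be a symmetric positive definite d×d matrix, and set q_i(y) = (y−x_i)^⊤ H^{−1} (y−x_i). Suppose y ∈ ℝ^d satisfies ∑_{i=1}^n g(q_i(y)) > 0, and define the mean shift update y′ = (∑_{i=1}^n x_i g(q_i(y))) / (∑_{i=1}^n g(q_i(y))). Then ∑_{i=1}^n k(q_i(y′)) ≥ ∑_{i=1}^n k(q_i(y)); equivalently, the kernel density estimate f̂_H(y) = n^{−1}(det H)^{−1/2}(1/2)∑_i k(q_i(y)) does not decrease under one step of the mean shift algorithm with unconstrained bandwidth matrix H. -/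

import Mathlib

/-!
For weights `w i` of positive sum, the cost `∑ w i * Q (z - x i)` is smallest at the weighted mean
`c` of the `x i`: by the parallel axis theorem, moving `z` from `y` to `c` lowers it by
`(∑ w i) * Q (y - c)`. Taking `w i = g (q_i y)`, the tangent lines of slope `-w i` lie below the
convex profile, so this decrease of the cost bounds the increase of `∑ k (q_i)` from below.
-/

open MeasureTheory Matrix

/-- The quadratic form `q_i(y) = (y − x_i)ᵀ H⁻¹ (y − x_i)`. -/
noncomputable def msQuad {d n : ℕ} (H : Matrix (Fin d) (Fin d) ℝ) (x : Fin n → (Fin d → ℝ))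
    (i : Fin n) (y : Fin d → ℝ) : ℝ :=
  (y - x i) ⬝ᵥ H⁻¹.mulVec (y - x i)

/-- `g = −k′` for a profile `k` defined on `[0,∞)`. -/
noncomputable def msG (k : ℝ → ℝ) (t : ℝ) : ℝ :=
  -(derivWithin k (Set.Ici 0) t)

section ParallelAxis

variable {𝕜 E N ι : Type*} [Field 𝕜] [AddCommGroup E] [Module 𝕜 E] [AddCommGroup N] [Module 𝕜 N]
  {s : Finset ι} {w : ι → 𝕜}

lemma sum_smul_centerMass_sub (hw : ∑ i ∈ s, w i ≠ 0) (x : ι → E) :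
    ∑ i ∈ s, w i • (s.centerMass w x - x i) = 0 := by
  simp only [smul_sub, Finset.sum_sub_distrib]
  rw [← Finset.sum_smul, Finset.centerMass, smul_inv_smul₀ hw, sub_self]

lemma sum_smul_quadraticMap_sub_eq_add_centerMass (hw : ∑ i ∈ s, w i ≠ 0)
    (Q : QuadraticMap 𝕜 E N) (x : ι → E) (y : E) :
    ∑ i ∈ s, w i • Q (y - x i) =
      ∑ i ∈ s, w i • Q (s.centerMass w x - x i) + (∑ i ∈ s, w i) • Q (y - s.centerMass w x) := by
  set c := s.centerMass w x
  have cross_eq_zero : ∑ i ∈ s, w i • QuadraticMap.polar Q (y - c) (c - x i) = 0 := by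
    simpa only [map_sum, map_smul, map_zero, QuadraticMap.polarBilin_apply_apply] using
      congrArg (Q.polarBilin (y - c)) (sum_smul_centerMass_sub hw x)
  calc ∑ i ∈ s, w i • Q (y - x i)
      = ∑ i ∈ s, w i • (Q (y - c) + Q (c - x i) + QuadraticMap.polar Q (y - c) (c - x i)) := by
        simp only [← QuadraticMap.map_add, sub_add_sub_cancel]
    _ = ∑ i ∈ s, w i • Q (c - x i) + (∑ i ∈ s, w i) • Q (y - c) := by
        simp only [smul_add, Finset.sum_add_distrib, cross_eq_zero, Finset.sum_smul]
        abel

end ParallelAxis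

/-- `m` is a subgradient of `f` at `a` relative to `S`: the line of slope `m` through `(a, f a)`
lies below the graph of `f` over `S`. It stands in for the derivative of a convex profile, so that
profiles with corners, such as `t ↦ max (1 - t) 0`, are covered. -/
def IsSubgradientWithinAt {𝕜 : Type*} [Ring 𝕜] [LE 𝕜] (f : 𝕜 → 𝕜) (m : 𝕜) (S : Set 𝕜) (a : 𝕜) :
    Prop :=
  ∀ t ∈ S, f a + m * (t - a) ≤ f t

lemma isSubgradientWithinAt_of_hasDerivWithinAt {f : ℝ → ℝ} {S : Set ℝ} {a f' : ℝ}
    (hf : ConvexOn ℝ S f) (ha : a ∈ S) (hf' : HasDerivWithinAt f f' S a) :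
    IsSubgradientWithinAt f f' S a := by
  intro t ht
  rcases lt_trichotomy a t with hat | rfl | hta
  · have le_slope := hf.le_slope_of_hasDerivWithinAt ha ht hat hf'
    rw [slope_def_field, le_div_iff₀ (sub_pos.2 hat)] at le_slope
    linarith
  · simp
  · have slope_le := hf.slope_le_of_hasDerivWithinAt ht ha hta hf'
    rw [slope_def_field, div_le_iff₀ (sub_pos.2 hta)] at slope_le
    linarith

lemma isSubgradientWithinAt_neg_msG {k : ℝ → ℝ} (hconv : ConvexOn ℝ (Set.Ici 0) k)
    (hdiff : DifferentiableOn ℝ k (Set.Ici 0)) {a : ℝ} (ha : 0 ≤ a) :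
    IsSubgradientWithinAt k (-msG k a) (Set.Ici 0) a := by
  rw [msG, neg_neg]
  exact isSubgradientWithinAt_of_hasDerivWithinAt hconv ha (hdiff a ha).hasDerivWithinAt

theorem meanShift_step_le_general {𝕜 E ι : Type*} [Field 𝕜] [LinearOrder 𝕜] [IsStrictOrderedRing 𝕜]
    [AddCommGroup E] [Module 𝕜 E] {Q : QuadraticForm 𝕜 E} (hQ : ∀ v, 0 ≤ Q v)
    {k : 𝕜 → 𝕜} {s : Finset ι} {w : ι → 𝕜} {x : ι → E} {y : E}
    (hw : ∀ i ∈ s, IsSubgradientWithinAt k (-w i) (Set.Ici 0) (Q (y - x i)))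
    (hpos : 0 < ∑ i ∈ s, w i) :
    ∑ i ∈ s, k (Q (y - x i)) ≤ ∑ i ∈ s, k (Q (s.centerMass w x - x i)) := by
  set c := s.centerMass w x
  have cost_le : ∑ i ∈ s, w i * Q (c - x i) ≤ ∑ i ∈ s, w i * Q (y - x i) := by
    have parallel_axis := sum_smul_quadraticMap_sub_eq_add_centerMass hpos.ne' Q x y
    simp only [smul_eq_mul] at parallel_axis
    rw [parallel_axis]
    exact le_add_of_nonneg_right (mul_nonneg hpos.le (hQ _))
  calc ∑ i ∈ s, k (Q (y - x i))
      ≤ ∑ i ∈ s, k (Q (y - x i)) + (∑ i ∈ s, w i * Q (y - x i) - ∑ i ∈ s, w i * Q (c - x i)) :=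
        le_add_of_nonneg_right (sub_nonneg.2 cost_le)
    _ = ∑ i ∈ s, (k (Q (y - x i)) + -w i * (Q (c - x i) - Q (y - x i))) := by
        rw [← Finset.sum_sub_distrib, ← Finset.sum_add_distrib]
        exact Finset.sum_congr rfl fun i _ => by ring
    _ ≤ ∑ i ∈ s, k (Q (c - x i)) := Finset.sum_le_sum fun i hi => hw i hi _ (hQ _)

lemma msQuad_eq_toQuadraticForm' {d n : ℕ} (H : Matrix (Fin d) (Fin d) ℝ)
    (x : Fin n → (Fin d → ℝ)) (i : Fin n) (y : Fin d → ℝ) :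
    msQuad H x i y = H⁻¹.toQuadraticForm' (y - x i) :=
  (toLinearMap₂'_apply' H⁻¹ (y - x i) (y - x i)).symm

/-- The mean shift step does not decrease the kernel density estimate: if the profile
`k : [0,∞) → ℝ` is convex, differentiable and nonincreasing, `g = −k′`, and
`y′ = (∑ᵢ x_i g(q_i(y))) / (∑ᵢ g(q_i(y)))` is the mean shift update of `y` (well defined since
`∑ᵢ g(q_i(y)) > 0`), where `q_i(y) = (y−x_i)ᵀ H⁻¹ (y−x_i)`, then
`∑ᵢ k(q_i(y′)) ≥ ∑ᵢ k(q_i(y))`; equivalently the kernel density estimate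
`f̂_H(y) = n⁻¹ (det H)^{−1/2} (1/2) ∑ᵢ k(q_i(y))` does not decrease under one mean shift step
with unconstrained bandwidth matrix `H`. -/
theorem meanShift_step_le {d n : ℕ} (k : ℝ → ℝ)
    (hconv : ConvexOn ℝ (Set.Ici 0) k)
    (hdiff : DifferentiableOn ℝ k (Set.Ici 0))
    (hmono : AntitoneOn k (Set.Ici 0))
    (x : Fin n → (Fin d → ℝ)) (H : Matrix (Fin d) (Fin d) ℝ) (hH : H.PosDef)
    (y : Fin d → ℝ) (hpos : 0 < ∑ i, msG k (msQuad H x i y))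
    (y' : Fin d → ℝ)
    (hy' : y' = (∑ i, msG k (msQuad H x i y))⁻¹ • ∑ i, msG k (msQuad H x i y) • x i) :
    ∑ i, k (msQuad H x i y) ≤ ∑ i, k (msQuad H x i y') := by
  have hQ := hH.inv.toQuadraticForm'.nonneg
  simp only [hy', msQuad_eq_toQuadraticForm'] at hpos ⊢
  exact meanShift_step_le_general hQ
    (fun _ _ => isSubgradientWithinAt_neg_msG hconv hdiff (hQ _)) hpos
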